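/- arXiv:1810.03850 — 2 statements merged into one kernel-verified Lean document; each statement's English description precedes it below -/
import Mathlib

section
/- Let K ≥ 1, m, r ∈ ℕ and Λ > 1. There exists C > 0, depending only on K, m, r and Λ, such that for every collection (X₁, …, X_K) of centered jointly Gaussian real random variables with E X_j² ∈ [Λ^{−1}, Λ] for every j, and every θ ∈ ℝ, one has |E ∏_{j=1}^{K} ∂_θ^r 𝓗_m(e^{iθX_j})| ≤ C, where |·| is the complex modulus. In particular the bound is uniform in θ ∈ ℝ. -/
open MeasureTheory ProbabilityTheory Filter

noncomputable section

def IsCenteredGaussianFamily {Ω ι : Type*} [MeasurableSpace Ω] (P : Measure Ω)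
    (X : ι → Ω → ℝ) : Prop :=
  ∀ (A : Finset ι) (c : ι → ℝ), ∃ v : NNReal,
    Measure.map (fun ω => ∑ i ∈ A, c i * X i ω) P = gaussianReal 0 v

def wick (v : ℝ) (n : ℕ) (x : ℝ) : ℝ :=
  Real.sqrt v ^ n * Polynomial.aeval (x / Real.sqrt v) (Polynomial.hermite n)

def hFun (m : ℕ) (θ x a : ℝ) : ℂ :=
  Complex.exp (Complex.I * θ * x) -
    ∑ n ∈ Finset.range m, (Complex.I ^ n / (n.factorial : ℂ)) * (θ : ℂ) ^ n *
      Complex.exp (((-(a * θ ^ 2) / 2 : ℝ) : ℂ)) * ((wick a n x : ℝ) : ℂ)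

/-!
A centered Gaussian of variance `σ²` is `σ Z` with `Z` standard, and `𝓗_m(e^{iθσZ})` taken at
variance `σ²` is `𝓗_m(e^{i(σθ)Z})` taken at variance `1`. Each `θ`-derivative therefore contributes
a factor `σ`, and everything reduces to `σ = 1`. There
`∂_θ^r 𝓗_m(e^{iθZ}) = (iZ)^r e^{iθZ} - ∑_{n<m} (iⁿ/n!) Heₙ(Z) ∂_θ^r (θⁿ e^{-θ²/2})`,
and since every derivative of `θⁿ e^{-θ²/2}` is bounded, this is dominated, uniformly in `θ`, by
a function of `Z` of polynomial growth, which lies in every `L^p` with `p < ∞`. Hölder's inequality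
with `K` exponents equal to `K` then bounds the product, whatever the correlations.
-/

open scoped ENNReal NNReal Polynomial

section Lp

variable {Ω : Type*} [MeasurableSpace Ω] {μ : Measure Ω}

lemma eLpNorm_prod_le {ι 𝕜 : Type*} [NormedField 𝕜] (s : Finset ι) {f : ι → Ω → 𝕜}
    (p : ι → ℝ≥0∞) (hf : ∀ i ∈ s, AEStronglyMeasurable (f i) μ) :
    eLpNorm (∏ i ∈ s, f i) (∑ i ∈ s, (p i)⁻¹)⁻¹ μ ≤ ∏ i ∈ s, eLpNorm (f i) (p i) μ := by
  induction s using Finset.cons_induction with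
  | empty =>
    by_cases hμ : μ = 0 <;> simp [eLpNormEssSup_const, hμ, Pi.one_def]
  | cons i s hi ih =>
    obtain ⟨hfi, hfs⟩ := Finset.forall_mem_cons hi _ |>.1 hf
    have : ENNReal.HolderTriple (p i) (∑ j ∈ s, (p j)⁻¹)⁻¹
        (∑ j ∈ Finset.cons i s hi, (p j)⁻¹)⁻¹ := ⟨by simp⟩
    rw [Finset.prod_cons, Finset.prod_cons]
    calc eLpNorm (f i • ∏ j ∈ s, f j) _ μ
        ≤ eLpNorm (f i) (p i) μ * eLpNorm (∏ j ∈ s, f j) (∑ j ∈ s, (p j)⁻¹)⁻¹ μ :=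
          eLpNorm_smul_le_mul_eLpNorm (Finset.aestronglyMeasurable_prod _ hfs) hfi
      _ ≤ _ := by gcongr; exact ih hfs

lemma integrable_prod_and_integral_norm_prod_le {ι 𝕜 : Type*} [Fintype ι] [Nonempty ι]
    [NormedField 𝕜] {f : ι → Ω → 𝕜} {c : ι → ℝ≥0} (hf : ∀ i, AEStronglyMeasurable (f i) μ)
    (hc : ∀ i, eLpNorm (f i) (Fintype.card ι) μ ≤ c i) :
    Integrable (fun ω => ∏ i, f i ω) μ ∧ ∫ ω, ‖∏ i, f i ω‖ ∂μ ≤ ∏ i, (c i : ℝ) := by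
  have hexponent : (∑ _i : ι, (Fintype.card ι : ℝ≥0∞)⁻¹)⁻¹ = 1 := by
    simp [ENNReal.mul_inv_cancel]
  have hprod : eLpNorm (fun ω => ∏ i, f i ω) 1 μ ≤ (∏ i, c i : ℝ≥0) := by
    calc eLpNorm (fun ω => ∏ i, f i ω) 1 μ ≤ ∏ i, eLpNorm (f i) (Fintype.card ι) μ := by
          simpa only [hexponent, Finset.prod_fn] using
            eLpNorm_prod_le Finset.univ (fun _ => (Fintype.card ι : ℝ≥0∞)) fun i _ => hf i
      _ ≤ ∏ i, (c i : ℝ≥0∞) := Finset.prod_le_prod' fun i _ => hc i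
      _ = _ := by push_cast; rfl
  have hint : Integrable (fun ω => ∏ i, f i ω) μ :=
    memLp_one_iff_integrable.1 ⟨Finset.aestronglyMeasurable_fun_prod _ fun i _ => hf i,
      hprod.trans_lt ENNReal.coe_lt_top⟩
  refine ⟨hint, ?_⟩
  rw [integral_norm_eq_lintegral_enorm hint.1, ← eLpNorm_one_eq_lintegral_enorm]
  simpa using ENNReal.toReal_mono ENNReal.coe_ne_top hprod

lemma memLp_aeval_of_forall_memLp [IsFiniteMeasure μ] {R : Type*} [CommSemiring R] [Algebra R ℝ]
    {X : Ω → ℝ} (hX : ∀ p : ℝ≥0∞, p ≠ ∞ → MemLp X p μ) (q : R[X]) {p : ℝ≥0∞} (hp : p ≠ ∞) :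
    MemLp (fun ω => Polynomial.aeval (X ω) q) p μ := by
  have hpow : ∀ n : ℕ, ∀ p : ℝ≥0∞, p ≠ ∞ → MemLp (fun ω => X ω ^ n) p μ := by
    intro n
    induction n with
    | zero => simpa using fun p _ => memLp_const (1 : ℝ)
    | succ n ih =>
      intro p hp
      have h2p : p * 2 ≠ ∞ := ENNReal.mul_ne_top hp ENNReal.ofNat_ne_top
      have : ENNReal.HolderTriple (p * 2) (p * 2) p := ⟨by
        rw [ENNReal.mul_inv (.inr ENNReal.ofNat_ne_top) (.inr two_ne_zero), ← mul_add,
          ENNReal.inv_two_add_inv_two, mul_one]⟩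
      simpa only [pow_succ] using (hX _ h2p).mul' (ih _ h2p)
  induction q using Polynomial.induction_on' with
  | add q₁ q₂ h₁ h₂ =>
    simp only [map_add]
    exact h₁.add h₂
  | monomial n c =>
    simpa only [Polynomial.aeval_monomial] using (hpow n p hp).const_mul (algebraMap R ℝ c)

lemma eLpNorm_comp_of_hasLaw {E F : Type*} [MeasurableSpace E] [NormedAddCommGroup F]
    {ν : Measure E} {X : Ω → E} (hX : HasLaw X ν μ) {f : E → F} (hf : AEStronglyMeasurable f ν)
    (p : ℝ≥0∞) : eLpNorm (fun ω => f (X ω)) p μ = eLpNorm f p ν := by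
  rw [← hX.map_eq] at hf ⊢
  exact (eLpNorm_map_measure hf hX.aemeasurable).symm

end Lp

section PolyGauss

/-- The product `q(t) e^{-a t² / 2}` of a polynomial and a Gaussian; with `q = Xⁿ` it is the
`θ`-dependent factor of the `n`-th chaos component of `e^{iθX}` when `X` has variance `a`. -/
def polyGauss (q : ℂ[X]) (a t : ℝ) : ℂ :=
  q.eval (t : ℂ) * Complex.exp ((-(a * t ^ 2) / 2 : ℝ) : ℂ)

lemma contDiff_polyGauss (q : ℂ[X]) (a : ℝ) {k : WithTop ℕ∞} : ContDiff ℝ k (polyGauss q a) := by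
  have hq : ContDiff ℂ k fun z : ℂ => q.eval z := by
    simpa using q.contDiff_aeval (𝕜 := ℂ) k
  have hexp : ContDiff ℝ k fun t : ℝ => -(a * t ^ 2) / 2 := by fun_prop
  exact (hq.restrict_scalars ℝ |>.comp Complex.ofRealCLM.contDiff).mul
    (Complex.ofRealCLM.contDiff.comp hexp).cexp

lemma deriv_polyGauss (q : ℂ[X]) (a : ℝ) :
    deriv (polyGauss q a) =
      polyGauss (Polynomial.derivative q - Polynomial.C (a : ℂ) * Polynomial.X * q) a := by
  funext t
  have hq : HasDerivAt (fun t : ℝ => q.eval (t : ℂ)) (q.derivative.eval (t : ℂ)) t :=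
    (q.hasDerivAt (t : ℂ)).comp_ofReal
  have hexp : HasDerivAt (fun t : ℝ => -(a * t ^ 2) / 2) (-(a * t)) t :=
    (((hasDerivAt_pow 2 t).const_mul a).neg.div_const 2).congr_deriv (by norm_num; ring)
  refine (hq.mul hexp.ofReal_comp.cexp).deriv.trans ?_
  simp only [polyGauss, Polynomial.eval_sub, Polynomial.eval_mul, Polynomial.eval_C,
    Polynomial.eval_X]
  push_cast
  ring

lemma abs_pow_mul_exp_neg_mul_sq_le {a : ℝ} (ha : 0 < a) (n : ℕ) (t : ℝ) :
    |t| ^ n * Real.exp (-(a * t ^ 2) / 2) ≤ n.factorial * Real.exp (1 / (2 * a)) := by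
  have hpow : |t| ^ n ≤ n.factorial * Real.exp |t| := by
    have h := Real.pow_div_factorial_le_exp |t| (abs_nonneg t) n
    rwa [div_le_iff₀' (by positivity)] at h
  have hsq : |t| + -(a * t ^ 2) / 2 ≤ 1 / (2 * a) := by
    rw [le_div_iff₀ (by positivity), ← sq_abs t]
    nlinarith [sq_nonneg (a * |t| - 1)]
  calc |t| ^ n * Real.exp (-(a * t ^ 2) / 2)
      ≤ n.factorial * Real.exp |t| * Real.exp (-(a * t ^ 2) / 2) := by gcongr
    _ = n.factorial * Real.exp (|t| + -(a * t ^ 2) / 2) := by rw [Real.exp_add, mul_assoc]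
    _ ≤ n.factorial * Real.exp (1 / (2 * a)) := by gcongr

lemma exists_norm_polyGauss_le (q : ℂ[X]) {a : ℝ} (ha : 0 < a) :
    ∃ B, ∀ t, ‖polyGauss q a t‖ ≤ B := by
  induction q using Polynomial.induction_on' with
  | add q₁ q₂ h₁ h₂ =>
    obtain ⟨B₁, hB₁⟩ := h₁
    obtain ⟨B₂, hB₂⟩ := h₂
    refine ⟨B₁ + B₂, fun t => ?_⟩
    rw [polyGauss, Polynomial.eval_add, add_mul]
    exact norm_add_le_of_le (hB₁ t) (hB₂ t)
  | monomial n c =>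
    refine ⟨‖c‖ * (n.factorial * Real.exp (1 / (2 * a))), fun t => ?_⟩
    rw [polyGauss, Polynomial.eval_monomial, norm_mul, norm_mul, norm_pow, Complex.norm_real,
      Complex.norm_exp_ofReal, Real.norm_eq_abs, mul_assoc]
    exact mul_le_mul_of_nonneg_left (abs_pow_mul_exp_neg_mul_sq_le ha n t) (norm_nonneg c)

lemma exists_norm_iteratedDeriv_polyGauss_le (r : ℕ) (q : ℂ[X]) {a : ℝ} (ha : 0 < a) :
    ∃ B, ∀ t, ‖iteratedDeriv r (polyGauss q a) t‖ ≤ B := by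
  induction r generalizing q with
  | zero => simpa only [iteratedDeriv_zero] using exists_norm_polyGauss_le q ha
  | succ r ih => simpa only [iteratedDeriv_succ', deriv_polyGauss] using ih _

end PolyGauss

section Wick

lemma continuous_wick (v : ℝ) (n : ℕ) : Continuous (wick v n) := by
  have h : Continuous fun y : ℝ => Polynomial.aeval y (Polynomial.hermite n) :=
    Polynomial.continuous_aeval _
  exact continuous_const.mul (h.comp (continuous_id.div_const _))

lemma wick_one (n : ℕ) (x : ℝ) : wick 1 n x = Polynomial.aeval x (Polynomial.hermite n) := by
  simp [wick]

lemma wick_sq_mul {c : ℝ} (hc : 0 ≤ c) (v : ℝ) (n : ℕ) (x : ℝ) :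
    wick (c ^ 2 * v) n (c * x) = c ^ n * wick v n x := by
  rw [wick, wick, Real.sqrt_mul (sq_nonneg c), Real.sqrt_sq hc, mul_pow, mul_assoc]
  rcases hc.eq_or_lt with rfl | hc
  · -- For `n ≠ 0` the factor `0 ^ n` hides the junk value of `x / √0`; for `n = 0`, `He₀ = 1`.
    rcases n with - | n <;> simp
  · rw [mul_div_mul_left _ _ hc.ne']

end Wick

section HFun

lemma hFun_eq_cexp_sub_sum_polyGauss (m : ℕ) (θ x a : ℝ) :
    hFun m θ x a = Complex.exp (Complex.I * x * θ) - ∑ n ∈ Finset.range m,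
      Complex.I ^ n / (n.factorial : ℂ) * wick a n x * polyGauss (Polynomial.X ^ n) a θ := by
  simp only [hFun, polyGauss, Polynomial.eval_pow, Polynomial.eval_X]
  congr 1
  · ring_nf
  · exact Finset.sum_congr rfl fun n _ => by ring

lemma contDiff_cexp_const_mul_ofReal (c : ℂ) {k : WithTop ℕ∞} :
    ContDiff ℝ k fun t : ℝ => Complex.exp (c * t) :=
  (contDiff_const.mul Complex.ofRealCLM.contDiff).cexp

lemma iteratedDeriv_cexp_const_mul_ofReal (r : ℕ) (c : ℂ) (t : ℝ) :
    iteratedDeriv r (fun t : ℝ => Complex.exp (c * t)) t = c ^ r * Complex.exp (c * t) := by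
  have hderiv : deriv (fun t : ℝ => Complex.exp (c * t)) =
      fun t : ℝ => c * Complex.exp (c * t) := by
    funext t
    have hlin : HasDerivAt (fun t : ℝ => c * (t : ℂ)) c t := by
      simpa using (hasDerivAt_id t).ofReal_comp.const_mul c
    rw [hlin.cexp.deriv, mul_comm]
  induction r with
  | zero => simp
  | succ r ih => rw [iteratedDeriv_succ', hderiv, iteratedDeriv_const_mul_field, ih]; ring

lemma contDiff_hFun (m : ℕ) (x a : ℝ) {k : WithTop ℕ∞} : ContDiff ℝ k fun θ => hFun m θ x a := by
  simp only [hFun_eq_cexp_sub_sum_polyGauss]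
  exact (contDiff_cexp_const_mul_ofReal _).sub
    (ContDiff.sum fun n _ => contDiff_const.mul (contDiff_polyGauss _ a))

lemma iteratedDeriv_hFun (m r : ℕ) (θ x a : ℝ) :
    iteratedDeriv r (fun t => hFun m t x a) θ =
      (Complex.I * x) ^ r * Complex.exp (Complex.I * x * θ) - ∑ n ∈ Finset.range m,
        Complex.I ^ n / (n.factorial : ℂ) * wick a n x *
          iteratedDeriv r (polyGauss (Polynomial.X ^ n) a) θ := by
  have hterm : ∀ n ∈ Finset.range m, ContDiffAt ℝ r (fun t => Complex.I ^ n / (n.factorial : ℂ) *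
      wick a n x * polyGauss (Polynomial.X ^ n) a t) θ :=
    fun n _ => (contDiff_const.mul (contDiff_polyGauss _ a)).contDiffAt
  simp only [hFun_eq_cexp_sub_sum_polyGauss]
  rw [iteratedDeriv_fun_sub (contDiff_cexp_const_mul_ofReal _).contDiffAt (ContDiffAt.sum hterm),
    iteratedDeriv_cexp_const_mul_ofReal, iteratedDeriv_fun_sum hterm]
  simp only [iteratedDeriv_const_mul_field]

lemma continuous_iteratedDeriv_hFun (m r : ℕ) (θ a : ℝ) :
    Continuous fun x => iteratedDeriv r (fun t => hFun m t x a) θ := by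
  have := continuous_wick a
  simp only [iteratedDeriv_hFun]
  fun_prop

lemma hFun_mul_sq_mul {c : ℝ} (hc : 0 ≤ c) (m : ℕ) (θ x a : ℝ) :
    hFun m θ (c * x) (c ^ 2 * a) = hFun m (c * θ) x a := by
  simp only [hFun, wick_sq_mul hc]
  push_cast
  congr 1
  · ring_nf
  · exact Finset.sum_congr rfl fun n _ => by ring_nf

lemma iteratedDeriv_hFun_mul_sq_mul {c : ℝ} (hc : 0 ≤ c) (m r : ℕ) (θ x a : ℝ) :
    iteratedDeriv r (fun t => hFun m t (c * x) (c ^ 2 * a)) θ =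
      c ^ r • iteratedDeriv r (fun t => hFun m t x a) (c * θ) := by
  simp only [hFun_mul_sq_mul hc]
  exact congrFun (iteratedDeriv_comp_const_smul (contDiff_hFun m x a) c) θ

end HFun

section Gaussian

lemma exists_memLp_norm_iteratedDeriv_hFun_le (m r : ℕ) {p : ℝ≥0∞} (hp : p ≠ ∞) :
    ∃ G : ℝ → ℝ, MemLp G p (gaussianReal 0 1) ∧
      ∀ θ x, ‖iteratedDeriv r (fun t => hFun m t x 1) θ‖ ≤ G x := by
  choose B hB using fun n : ℕ =>
    exists_norm_iteratedDeriv_polyGauss_le r (Polynomial.X ^ n) one_pos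
  have hmem (q : ℤ[X]) : MemLp (fun x : ℝ => Polynomial.aeval x q) p (gaussianReal 0 1) :=
    memLp_aeval_of_forall_memLp (fun p hp => memLp_id_gaussianReal' p hp) q hp
  refine ⟨fun x => ‖Polynomial.aeval x (Polynomial.X ^ r : ℤ[X])‖ +
      ∑ n ∈ Finset.range m, ‖Polynomial.aeval x (Polynomial.hermite n)‖ * B n,
    (hmem _).norm.add (memLp_finsetSum _ fun n _ => (hmem _).norm.mul_const _), fun θ x => ?_⟩
  rw [iteratedDeriv_hFun]
  refine norm_sub_le_of_le ?_ (norm_sum_le_of_le _ fun n _ => ?_)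
  · have hphase : Complex.I * x * θ = Complex.I * (x * θ : ℝ) := by push_cast; ring
    rw [norm_mul, norm_pow, norm_mul, Complex.norm_I, one_mul, Complex.norm_real, hphase,
      Complex.norm_exp_I_mul_ofReal, mul_one, map_pow, Polynomial.aeval_X, norm_pow]
  · have hcoeff : ‖Complex.I ^ n / (n.factorial : ℂ)‖ ≤ 1 := by
      rw [norm_div, norm_pow, Complex.norm_I, one_pow, Complex.norm_natCast]
      exact div_le_one_of_le₀ (mod_cast n.factorial_pos) (by positivity)
    rw [norm_mul, norm_mul, Complex.norm_real, wick_one]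
    calc _ ≤ 1 * ‖Polynomial.aeval x (Polynomial.hermite n)‖ * B n := by gcongr; exact hB n θ
      _ = _ := by rw [one_mul]

lemma hasLaw_sqrt_mul_gaussianReal (v : ℝ≥0) :
    HasLaw (fun x => √(v : ℝ) * x) (gaussianReal 0 v) (gaussianReal 0 1) where
  map_eq := by
    rw [gaussianReal_map_const_mul, mul_zero, mul_one]
    congr 1
    ext
    simp

lemma exists_eLpNorm_iteratedDeriv_hFun_le (m r : ℕ) {p : ℝ≥0∞} (hp : p ≠ ∞) :
    ∃ C : ℝ≥0, ∀ (v : ℝ≥0) (θ : ℝ),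
      eLpNorm (fun x => iteratedDeriv r (fun t => hFun m t x v) θ) p (gaussianReal 0 v) ≤
        C * NNReal.sqrt v ^ r := by
  obtain ⟨G, hG, hle⟩ := exists_memLp_norm_iteratedDeriv_hFun_le m r hp
  refine ⟨(eLpNorm G p (gaussianReal 0 1)).toNNReal, fun v θ => ?_⟩
  have hscale (x : ℝ) : iteratedDeriv r (fun t => hFun m t (√(v : ℝ) * x) v) θ =
      √(v : ℝ) ^ r • iteratedDeriv r (fun t => hFun m t x 1) (√(v : ℝ) * θ) := by
    rw [← iteratedDeriv_hFun_mul_sq_mul (Real.sqrt_nonneg _), mul_one, Real.sq_sqrt v.coe_nonneg]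
  rw [ENNReal.coe_toNNReal hG.eLpNorm_ne_top,
    ← eLpNorm_comp_of_hasLaw (hasLaw_sqrt_mul_gaussianReal v)
      (continuous_iteratedDeriv_hFun m r θ v).aestronglyMeasurable]
  simp only [hscale]
  calc _ ≤ ‖√(v : ℝ) ^ r‖ₑ *
        eLpNorm (fun x => iteratedDeriv r (fun t => hFun m t x 1) (√(v : ℝ) * θ)) p
          (gaussianReal 0 1) := eLpNorm_const_smul_le
    _ ≤ NNReal.sqrt v ^ r * eLpNorm G p (gaussianReal 0 1) := by
        gcongr
        · simp [← Real.coe_sqrt]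
        · exact eLpNorm_mono_real (hle _)
    _ = _ := mul_comm _ _

lemma exists_integral_norm_prod_iteratedDeriv_hFun_le {ι : Type*} [Fintype ι] [Nonempty ι]
    (m r : ι → ℕ) :
    ∃ C : ℝ≥0, ∀ (Ω : Type*) [MeasurableSpace Ω] (P : Measure Ω) (X : ι → Ω → ℝ) (v : ι → ℝ≥0),
      (∀ j, HasLaw (X j) (gaussianReal 0 (v j)) P) → ∀ θ : ι → ℝ,
        let F := fun ω => ∏ j, iteratedDeriv (r j) (fun t => hFun (m j) t (X j ω) (v j)) (θ j)
        Integrable F P ∧ ∫ ω, ‖F ω‖ ∂P ≤ C * ∏ j, √(v j) ^ r j := by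
  choose C hC using fun j =>
    exists_eLpNorm_iteratedDeriv_hFun_le (m j) (r j) (ENNReal.natCast_ne_top (Fintype.card ι))
  refine ⟨∏ j, C j, fun Ω _ P X v hX θ => ?_⟩
  have hcont (j : ι) := continuous_iteratedDeriv_hFun (m j) (r j) (θ j) (v j)
  have hnorm (j : ι) : eLpNorm
      (fun ω => iteratedDeriv (r j) (fun t => hFun (m j) t (X j ω) (v j)) (θ j))
      (Fintype.card ι) P ≤ (C j * NNReal.sqrt (v j) ^ r j : ℝ≥0) := by
    rw [eLpNorm_comp_of_hasLaw (hX j) (hcont j).aestronglyMeasurable]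
    exact_mod_cast hC j (v j) (θ j)
  have hmeas (j : ι) := (hcont j).comp_aestronglyMeasurable
    (hX j).aemeasurable.aestronglyMeasurable
  simpa [Finset.prod_mul_distrib] using integrable_prod_and_integral_norm_prod_le hmeas hnorm

lemma hasLaw_gaussianReal_of_integral_eq_zero {Ω : Type*} [MeasurableSpace Ω] {P : Measure Ω}
    {X : Ω → ℝ} (hX : HasGaussianLaw X P) (h0 : ∫ ω, X ω ∂P = 0) :
    HasLaw X (gaussianReal 0 (∫ ω, X ω ^ 2 ∂P).toNNReal) P where
  aemeasurable := hX.aemeasurable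
  map_eq := by
    rw [hX.map_eq_gaussianReal, variance_of_integral_eq_zero hX.aemeasurable h0, h0]

end Gaussian

namespace IsCenteredGaussianFamily

variable {Ω ι : Type*} [MeasurableSpace Ω] {P : Measure Ω} {X : ι → Ω → ℝ}

lemma exists_hasLaw (hX : IsCenteredGaussianFamily P X) (j : ι) :
    ∃ v : ℝ≥0, HasLaw (X j) (gaussianReal 0 v) P := by
  obtain ⟨v, hv⟩ := hX {j} fun _ => 1
  simp only [Finset.sum_singleton, one_mul] at hv
  exact ⟨v, .of_map_ne_zero (hv ▸ NeZero.ne _), hv⟩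

lemma hasGaussianLaw (hX : IsCenteredGaussianFamily P X) (j : ι) : HasGaussianLaw (X j) P :=
  (hX.exists_hasLaw j).choose_spec.hasGaussianLaw

lemma integral_eq_zero (hX : IsCenteredGaussianFamily P X) (j : ι) : ∫ ω, X j ω ∂P = 0 := by
  obtain ⟨v, hv⟩ := hX.exists_hasLaw j
  rw [hv.integral_eq, integral_id_gaussianReal]

end IsCenteredGaussianFamily

theorem stmt3_general {ι : Type*} [Fintype ι] [Nonempty ι] (m r : ι → ℕ) (Λ : ℝ) :
    ∃ C > 0,
      ∀ (Ω : Type*) [MeasurableSpace Ω] (P : Measure Ω) (X : ι → Ω → ℝ),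
        (∀ j, HasGaussianLaw (X j) P) → (∀ j, ∫ ω, X j ω ∂P = 0) →
        (∀ j, ∫ ω, X j ω ^ 2 ∂P ≤ Λ) → ∀ θ : ι → ℝ,
          let F := fun ω => ∏ j, iteratedDeriv (r j)
            (fun t => hFun (m j) t (X j ω) (∫ ω', X j ω' ^ 2 ∂P)) (θ j)
          Integrable F P ∧ ∫ ω, ‖F ω‖ ∂P ≤ C := by
  obtain ⟨C, hC⟩ := exists_integral_norm_prod_iteratedDeriv_hFun_le m r
  refine ⟨C * ∏ j, √Λ ^ r j + 1, by positivity, fun Ω _ P X hX h0 hΛ θ => ?_⟩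
  have hvar (j : ι) : ((∫ ω, X j ω ^ 2 ∂P).toNNReal : ℝ) = ∫ ω, X j ω ^ 2 ∂P :=
    Real.coe_toNNReal _ (integral_nonneg fun ω => sq_nonneg _)
  obtain ⟨hint, hle⟩ := hC Ω P X _
    (fun j => hasLaw_gaussianReal_of_integral_eq_zero (hX j) (h0 j)) θ
  simp only [hvar] at hint hle
  refine ⟨hint, hle.trans (le_add_of_le_of_nonneg ?_ zero_le_one)⟩
  gcongr with j
  exact hΛ j

/-- bound (2.6): for centered jointly Gaussian `X₁,…,X_K` with variances in
`[Λ⁻¹, Λ]`, `|E ∏_j ∂_θ^r 𝓗_m(e^{iθX_j})| ≤ C` uniformly in `θ`. -/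
theorem stmt3 (K : ℕ) (hK : 1 ≤ K) (m r : ℕ) (Λ : ℝ) (hΛ : 1 < Λ) :
    ∃ C > 0,
      ∀ (Ω : Type) (_ : MeasurableSpace Ω) (P : Measure Ω), IsProbabilityMeasure P →
      ∀ X : Fin K → Ω → ℝ, IsCenteredGaussianFamily P X →
        (∀ j, (∫ ω, X j ω ^ 2 ∂P) ∈ Set.Icc Λ⁻¹ Λ) →
        ∀ θ : ℝ,
          ‖∫ ω, ∏ j, iteratedDeriv r
              (fun t => hFun m t (X j ω) (∫ ω', X j ω' ^ 2 ∂P)) θ ∂P‖ ≤ C := by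
  have : Nonempty (Fin K) := ⟨⟨0, hK⟩⟩
  obtain ⟨C, hC, h⟩ := stmt3_general (fun _ : Fin K => m) (fun _ => r) Λ
  exact ⟨C, hC, fun Ω _ P _ X hX hvar θ => (norm_integral_le_integral_norm _).trans
    (h Ω P X hX.hasGaussianLaw hX.integral_eq_zero (fun j => (hvar j).2) fun _ => θ).2⟩
end
end

section
/- Let α > 0, Λ > 1, ε ∈ (0,1), K ≥ 1, L > 0, and let x₁, …, x_K ∈ ℝ^d with clusters taken at scale Lε. Let R : ℝ^d × ℝ^d → ℝ satisfy the standing covariance bound with parameters (α, Λ, ε). Then for every graph 𝓔 (multiplicities on unordered pairs of indices, no self-loops) all of whose edges join indices lying in different clusters, and for every choice of representatives u*(S) ∈ S of the clusters, one has ∏_{i<j} R(x_i, x_j)^{𝓔(i,j)} ≤ ((2K)^α Λ²)^{N} · ∏_{i<j} R(x_{u*(c(i))}, x_{u*(c(j))})^{𝓔(i,j)}, where c(i) denotes the cluster containing i and N = Σ_{i<j} 𝓔(i,j) is the total number of edges counted with multiplicity. -/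
open MeasureTheory Filter

noncomputable section

def anorm {d : ℕ} (s : Fin d → ℝ) (x : Fin d → ℝ) : ℝ :=
  ∑ j, |x j| ^ (1 / s j)

def CovBound {d : ℕ} (s : Fin d → ℝ) (α Λ ε : ℝ)
    (R : (Fin d → ℝ) → (Fin d → ℝ) → ℝ) : Prop :=
  ∀ x y, ε ^ α / (Λ * (anorm s (x - y) + ε) ^ α) ≤ R x y ∧
    R x y ≤ Λ * ε ^ α / (anorm s (x - y) + ε) ^ α

/-- `j` and `j'` lie in the same cluster of the points `x` at scale `δ`:
there is a finite chain of jumps of size `≤ δ` connecting them. -/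
def SameCluster {d K : ℕ} (s : Fin d → ℝ) (δ : ℝ) (x : Fin K → Fin d → ℝ) :
    Fin K → Fin K → Prop :=
  Relation.ReflTransGen fun i j => anorm s (x i - x j) ≤ δ

def pairs (K : ℕ) : Finset (Fin K × Fin K) :=
  Finset.univ.filter fun p => p.1 < p.2

/-!
Call two points chained if they are joined by jumps of length at most `δ`. Discarding repetitions, a
chain among `K` points has at most `K - 1` jumps, so chained points are at distance at most
`(K - 1) * δ`. Moving both endpoints of an edge of length at least `δ` along chains therefore
multiplies its length by at most `1 + 2 * (K - 1) ≤ 2 * K`, and a kernel comparable to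
`(ε / (dist y z + ε)) ^ α` up to `Λ` then changes by at most the factor `(2 * K) ^ α * Λ ^ 2`. Only
the triangle inequality enters, so everything happens in a pseudometric space.
-/

theorem prod_pow_le_pow_sum_mul_prod_pow {ι A : Type*} [CommSemiring A] [PartialOrder A]
    [IsOrderedRing A] {t : Finset ι} {f g : ι → A} {n : ι → ℕ} {C : A}
    (hf : ∀ i ∈ t, 0 ≤ f i) (hfg : ∀ i ∈ t, 0 < n i → f i ≤ C * g i) :
    ∏ i ∈ t, f i ^ n i ≤ C ^ (∑ i ∈ t, n i) * ∏ i ∈ t, g i ^ n i := by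
  rw [← Finset.prod_pow_eq_pow_sum, ← Finset.prod_mul_distrib]
  refine Finset.prod_le_prod (fun i hi => pow_nonneg (hf i hi) _) fun i hi => ?_
  rw [← mul_pow]
  rcases (n i).eq_zero_or_pos with hn | hn
  · simp only [hn, pow_zero, le_refl]
  · exact pow_le_pow_left₀ (hf i hi) (hfg i hi hn) _

section Chains

variable {X ι : Type*} [PseudoMetricSpace X] {δ : ℝ} {x : ι → X} {i j i' j' : ι}

theorem dist_le_walk_length_mul {G : SimpleGraph ι}
    (hG : ∀ a b, G.Adj a b → dist (x a) (x b) ≤ δ) (w : G.Walk i j) :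
    dist (x i) (x j) ≤ w.length * δ := by
  induction w with
  | nil => simp
  | @cons a b c hab w ih =>
    calc dist (x a) (x c) ≤ dist (x a) (x b) + dist (x b) (x c) := dist_triangle _ _ _
      _ ≤ δ + w.length * δ := add_le_add (hG a b hab) ih
      _ = (w.cons hab).length * δ := by rw [SimpleGraph.Walk.length_cons]; push_cast; ring

/-- Two indices are chained when finitely many jumps of length at most `δ` between the points `x`
lead from one to the other. This is the analogue of `SameCluster` for arbitrary pseudometric spaces
and index types. -/
def IsChained (δ : ℝ) (x : ι → X) : ι → ι → Prop :=
  Relation.ReflTransGen fun i j => dist (x i) (x j) ≤ δ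

variable [Fintype ι]

theorem IsChained.dist_le (hδ : 0 ≤ δ) (h : IsChained δ x i j) :
    dist (x i) (x j) ≤ (Fintype.card ι - 1) * δ := by
  have hsymm : Std.Symm fun i j => dist (x i) (x j) ≤ δ :=
    ⟨fun i j h => dist_comm (x i) (x j) ▸ h⟩
  rw [IsChained, ← SimpleGraph.reachable_fromEdgeSet_fromRel_eq_reflTransGen hsymm] at h
  obtain ⟨w, hw⟩ := h.exists_isPath
  have hlen : (w.length : ℝ) ≤ Fintype.card ι - 1 :=
    le_sub_iff_add_le.2 (mod_cast hw.length_lt)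
  calc dist (x i) (x j) ≤ w.length * δ :=
        dist_le_walk_length_mul (fun _ _ hab => ((SimpleGraph.fromEdgeSet_adj _).1 hab).1) w
    _ ≤ (Fintype.card ι - 1) * δ := by gcongr

theorem IsChained.dist_le_two_mul_card_mul (hδ : 0 ≤ δ) (hi : IsChained δ x i i')
    (hj : IsChained δ x j j') (hij : δ ≤ dist (x i) (x j)) :
    dist (x i') (x j') ≤ 2 * Fintype.card ι * dist (x i) (x j) := by
  have hcard : (1 : ℝ) ≤ Fintype.card ι := mod_cast Fintype.card_pos_iff.2 ⟨i⟩
  calc dist (x i') (x j')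
      ≤ dist (x i') (x i) + dist (x i) (x j) + dist (x j) (x j') := dist_triangle4 _ _ _ _
    _ ≤ (Fintype.card ι - 1) * δ + dist (x i) (x j) + (Fintype.card ι - 1) * δ := by
        gcongr
        · exact dist_comm (x i') (x i) ▸ hi.dist_le hδ
        · exact hj.dist_le hδ
    _ ≤ (Fintype.card ι - 1) * dist (x i) (x j) + dist (x i) (x j)
          + (Fintype.card ι - 1) * dist (x i) (x j) := by
        gcongr
    _ ≤ 2 * Fintype.card ι * dist (x i) (x j) := by
        linarith [dist_nonneg (x := x i) (y := x j)]

end Chains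

section Kernels

theorem add_rpow_le_mul_add_rpow {a b c ε α : ℝ} (hα : 0 ≤ α) (hε : 0 ≤ ε) (ha : 0 ≤ a)
    (hb : 0 ≤ b) (hc : 1 ≤ c) (hba : b ≤ c * a) :
    (b + ε) ^ α ≤ c ^ α * (a + ε) ^ α := by
  rw [← Real.mul_rpow (by positivity) (by positivity), mul_add]
  have hεc : ε ≤ c * ε := le_mul_of_one_le_left hε hc
  gcongr

variable {X : Type*} [PseudoMetricSpace X] {α Λ ε : ℝ} {R : X → X → ℝ}

/-- The kernel `R` is comparable, up to the factor `Λ`, to the power law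
`(ε / (dist y z + ε)) ^ α`. This is the analogue of `CovBound` for arbitrary pseudometric spaces. -/
def IsPowerLawKernel (α Λ ε : ℝ) (R : X → X → ℝ) : Prop :=
  ∀ y z, ε ^ α / (Λ * (dist y z + ε) ^ α) ≤ R y z ∧ R y z ≤ Λ * ε ^ α / (dist y z + ε) ^ α

theorem IsPowerLawKernel.nonneg (hR : IsPowerLawKernel α Λ ε R) (hΛ : 0 ≤ Λ) (hε : 0 ≤ ε)
    (y z : X) : 0 ≤ R y z :=
  le_trans (by positivity) (hR y z).1

theorem IsPowerLawKernel.le_mul (hR : IsPowerLawKernel α Λ ε R) (hα : 0 ≤ α) (hΛ : 0 < Λ)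
    (hε : 0 < ε) {c : ℝ} (hc : 1 ≤ c) {y z y' z' : X} (h : dist y' z' ≤ c * dist y z) :
    R y z ≤ c ^ α * Λ ^ 2 * R y' z' := by
  have hpow : (dist y' z' + ε) ^ α ≤ c ^ α * (dist y z + ε) ^ α :=
    add_rpow_le_mul_add_rpow hα hε.le dist_nonneg dist_nonneg hc h
  calc R y z ≤ Λ * ε ^ α / (dist y z + ε) ^ α := (hR y z).2
    _ = c ^ α * Λ * ε ^ α / (c ^ α * (dist y z + ε) ^ α) := by field_simp
    _ ≤ c ^ α * Λ * ε ^ α / (dist y' z' + ε) ^ α := by gcongr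
    _ = c ^ α * Λ ^ 2 * (ε ^ α / (Λ * (dist y' z' + ε) ^ α)) := by field_simp
    _ ≤ c ^ α * Λ ^ 2 * R y' z' := by gcongr; exact (hR y' z').1

end Kernels

theorem stmt7_general {X ι : Type*} [PseudoMetricSpace X] [Fintype ι] {α Λ ε δ : ℝ} (hα : 0 ≤ α)
    (hΛ : 0 < Λ) (hε : 0 < ε) (hδ : 0 ≤ δ) {x : ι → X} {R : X → X → ℝ}
    (hR : IsPowerLawKernel α Λ ε R) (P : Finset (ι × ι)) (𝓔 : ι → ι → ℕ)
    (hlong : ∀ p ∈ P, 0 < 𝓔 p.1 p.2 → δ ≤ dist (x p.1) (x p.2)) {u : ι → ι}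
    (hu : ∀ i, IsChained δ x i (u i)) :
    ∏ p ∈ P, R (x p.1) (x p.2) ^ 𝓔 p.1 p.2 ≤
      ((2 * (Fintype.card ι : ℝ)) ^ α * Λ ^ 2) ^ (∑ p ∈ P, 𝓔 p.1 p.2) *
        ∏ p ∈ P, R (x (u p.1)) (x (u p.2)) ^ 𝓔 p.1 p.2 := by
  refine prod_pow_le_pow_sum_mul_prod_pow (fun _ _ => hR.nonneg hΛ.le hε.le _ _)
    fun p hpP hp => ?_
  have hcard : (1 : ℝ) ≤ Fintype.card ι := mod_cast Fintype.card_pos_iff.2 ⟨p.1⟩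
  exact hR.le_mul hα hΛ hε (by linarith)
    ((hu p.1).dist_le_two_mul_card_mul hδ (hu p.2) (hlong p hpP hp))

section AnisotropicMetric

variable {d : ℕ} {s : Fin d → ℝ}

theorem anorm_zero (hs : ∀ j, s j ≠ 0) : anorm s 0 = 0 :=
  Finset.sum_eq_zero fun j _ => by
    rw [Pi.zero_apply, abs_zero, Real.zero_rpow (one_div_ne_zero (hs j))]

theorem anorm_neg (s x : Fin d → ℝ) : anorm s (-x) = anorm s x := by
  simp only [anorm, Pi.neg_apply, abs_neg]

theorem anorm_add_le (hs : ∀ j, 1 ≤ s j) (x y : Fin d → ℝ) :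
    anorm s (x + y) ≤ anorm s x + anorm s y := by
  rw [anorm, anorm, anorm, ← Finset.sum_add_distrib]
  refine Finset.sum_le_sum fun j _ => ?_
  have hj : 0 < s j := one_pos.trans_le (hs j)
  calc |(x + y) j| ^ (1 / s j) ≤ (|x j| + |y j|) ^ (1 / s j) := by
        gcongr
        exact abs_add_le _ _
    _ ≤ |x j| ^ (1 / s j) + |y j| ^ (1 / s j) :=
        Real.rpow_add_le_add_rpow (abs_nonneg _) (abs_nonneg _) (by positivity)
          ((div_le_one hj).2 (hs j))

/-- The pseudometric `anorm s (x - y)` of the scaling `s`. It is not an instance because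
`Fin d → ℝ` already carries the sup metric. -/
abbrev anisotropicMetric (hs : ∀ j, 1 ≤ s j) : PseudoMetricSpace (Fin d → ℝ) where
  dist x y := anorm s (x - y)
  dist_self x := by rw [sub_self, anorm_zero fun j => (one_pos.trans_le (hs j)).ne']
  dist_comm x y := by rw [← neg_sub, anorm_neg]
  dist_triangle x y z := by simpa only [sub_add_sub_cancel] using anorm_add_le hs (x - y) (y - z)

end AnisotropicMetric

/-- Proposition 2.4: replacing every endpoint of a cross-cluster graph by
the representative of its cluster costs at most a factor `(2K)^α Λ²` per edge. -/
theorem stmt7 (d : ℕ) (hd : 1 ≤ d) (s : Fin d → ℝ) (hs : ∀ j, 1 ≤ s j)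
    (α Λ ε : ℝ) (hα : 0 < α) (hΛ : 1 < Λ) (hε : ε ∈ Set.Ioo (0:ℝ) 1)
    (K : ℕ) (hK : 1 ≤ K) (L : ℝ) (hL : 0 < L)
    (x : Fin K → Fin d → ℝ)
    (R : (Fin d → ℝ) → (Fin d → ℝ) → ℝ) (hR : CovBound s α Λ ε R)
    (𝓔 : Fin K → Fin K → ℕ) (hsymm : ∀ i j, 𝓔 i j = 𝓔 j i) (hdiag : ∀ i, 𝓔 i i = 0)
    (hcross : ∀ i j, 0 < 𝓔 i j → ¬ SameCluster s (L * ε) x i j)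
    (u : Fin K → Fin K)
    (hu1 : ∀ i, SameCluster s (L * ε) x i (u i))
    (hu2 : ∀ i j, SameCluster s (L * ε) x i j → u i = u j) :
    ∏ p ∈ pairs K, R (x p.1) (x p.2) ^ 𝓔 p.1 p.2 ≤
      ((2 * (K : ℝ)) ^ α * Λ ^ 2) ^ (∑ p ∈ pairs K, 𝓔 p.1 p.2) *
        ∏ p ∈ pairs K, R (x (u p.1)) (x (u p.2)) ^ 𝓔 p.1 p.2 := by
  let _ := anisotropicMetric hs
  simpa only [Fintype.card_fin] using stmt7_general hα.le (one_pos.trans hΛ) hε.1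
    (mul_pos hL hε.1).le hR (pairs K) 𝓔
    (fun _ _ hE => le_of_not_ge fun h => hcross _ _ hE (.single h)) hu1
end
end
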